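/- Let K = MN. For every integer q, (Φ_N ⊗ I_M) D_K^q (Φ_N^H ⊗ I_M) = α_q D_K^q Π_K^{qM}, where α_q = exp(i(π/N)·q·((N mod 2) − q)). -/

import Mathlib

open Matrix Complex

/-- The `N × N` discrete Fresnel transform (DFnT) matrix `Φ_N`, with entries
`[Φ_N]_{m,n} = (1/√N) · exp(−iπ/4 + i(π/N)(m − n + (N mod 2)/2)²)`. -/
noncomputable def dfnt (N : ℕ) : Matrix (Fin N) (Fin N) ℂ :=
  Matrix.of fun m n : Fin N =>
    (1 / (Real.sqrt N : ℂ)) *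
      Complex.exp (-((Real.pi : ℂ) / 4) * Complex.I +
        ((Real.pi : ℂ) / N) * Complex.I *
          (((m : ℕ) : ℂ) - ((n : ℕ) : ℂ) + ((N % 2 : ℕ) : ℂ) / 2) ^ 2)

/-- The `q`-th integer power `D_K^q` of the diagonal matrix
`D_K = diag(1, e^{2πi/K}, …, e^{2πi(K−1)/K})`: its `k`-th diagonal entry is `e^{2πiqk/K}`. -/
noncomputable def Dzpow (K : ℕ) (q : ℤ) : Matrix (Fin K) (Fin K) ℂ :=
  Matrix.diagonal fun k : Fin K =>
    Complex.exp (2 * (Real.pi : ℂ) * Complex.I * (q : ℂ) * ((k : ℕ) : ℂ) / (K : ℂ))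

/-- The `q`-th integer power `Π_K^q` of the cyclic shift permutation matrix `Π_K`
(`[Π_K]_{m,n} = 1` iff `m ≡ n+1 (mod K)`): `[Π_K^q]_{m,n} = 1` iff `m ≡ n + q (mod K)`. -/
def Pzpow (K : ℕ) (q : ℤ) : Matrix (Fin K) (Fin K) ℂ :=
  Matrix.of fun m n : Fin K =>
    if (((m : ℕ) : ℤ) - ((n : ℕ) : ℤ) - q) % (K : ℤ) = 0 then 1 else 0

/-- `α_q = exp(i(π/N)·q·((N mod 2) − q))`. -/
noncomputable def alphaCoef (N : ℕ) (q : ℤ) : ℂ :=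
  Complex.exp (Complex.I * ((Real.pi : ℂ) / N) * (q : ℂ) * (((N % 2 : ℕ) : ℂ) - (q : ℂ)))

/-- Kronecker product of an `N × N` matrix `A` with an `M × M` matrix `B`, using the index
convention `[A ⊗ B]_{n₁M+m₁, n₂M+m₂} = A_{n₁,n₂} · B_{m₁,m₂}`, realized on `Fin (M * N)`
via `i ↦ (i / M, i % M)`. -/
def kron {M N : ℕ} (hM : 0 < M) (A : Matrix (Fin N) (Fin N) ℂ) (B : Matrix (Fin M) (Fin M) ℂ) :
    Matrix (Fin (M * N)) (Fin (M * N)) ℂ :=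
  Matrix.of fun i j : Fin (M * N) =>
    A ⟨(i : ℕ) / M, Nat.div_lt_of_lt_mul i.isLt⟩ ⟨(j : ℕ) / M, Nat.div_lt_of_lt_mul j.isLt⟩ *
      B ⟨(i : ℕ) % M, Nat.mod_lt _ hM⟩ ⟨(j : ℕ) % M, Nat.mod_lt _ hM⟩

/-!
Writing an index of `Fin (M * N)` as `nM + r` factors `D_{MN}^q` as `D_N^q ⊗ E` with `E` diagonal,
and `Π_{MN}^{qM}` as `Π_N^q ⊗ I_M`. By the mixed-product rule only `Φ_N D_N^q Φ_N^H` has to be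
computed. The entries of `Φ_N` are values of a quadratic chirp at `m - n`. Completing the square
shows that translating the chirp by `q` multiplies it by a character, and the chirp has period `N`,
so that `Φ_N D_N^q = α_q D_N^q Π_N^q Φ_N`. The translation rule also turns the entries of
`Φ_N Φ_N^H` into geometric sums of roots of unity, whence `Φ_N` is unitary.
-/

open scoped Kronecker

lemma mul_dvd_sub_sub_mul_iff {a : ℤ} (ha : a ≠ 0) (b q i j : ℤ) :
    a * b ∣ i - j - q * a ↔ b ∣ i / a - j / a - q ∧ i % a = j % a := by
  have sub_eq (hmod : i % a = j % a) : i - j - q * a = a * (i / a - j / a - q) := by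
    linear_combination hmod - Int.mul_ediv_add_emod i a + Int.mul_ediv_add_emod j a
  constructor
  · intro hdvd
    have hdvd_sub : a ∣ i - j :=
      (dvd_sub_left (dvd_mul_left a q)).1 ((dvd_mul_right a b).trans hdvd)
    have hmod : i % a = j % a := Int.emod_eq_emod_iff_emod_sub_eq_zero.2
      (Int.emod_eq_zero_of_dvd hdvd_sub)
    exact ⟨(mul_dvd_mul_iff_left ha).1 (sub_eq hmod ▸ hdvd), hmod⟩
  · rintro ⟨hdvd, hmod⟩
    exact sub_eq hmod ▸ mul_dvd_mul_left a hdvd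

section Kron

variable {M N : ℕ} (hM : 0 < M)

/-- The identification of `Fin (M * N)` with pairs underlying `kron`. The quotient by `M` is the
first component, so the blocks have size `M`. -/
def kronIndexEquiv (M N : ℕ) : Fin (M * N) ≃ Fin N × Fin M :=
  (finCongr (mul_comm M N)).trans finProdFinEquiv.symm

lemma kron_eq_submatrix_kronecker (A : Matrix (Fin N) (Fin N) ℂ) (B : Matrix (Fin M) (Fin M) ℂ) :
    kron hM A B = (A ⊗ₖ B).submatrix (kronIndexEquiv M N) (kronIndexEquiv M N) :=
  rfl

lemma kron_mul_kron (A A' : Matrix (Fin N) (Fin N) ℂ) (B B' : Matrix (Fin M) (Fin M) ℂ) :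
    kron hM A B * kron hM A' B' = kron hM (A * A') (B * B') := by
  simp only [kron_eq_submatrix_kronecker, submatrix_mul_equiv, mul_kronecker_mul]

lemma smul_kron (c : ℂ) (A : Matrix (Fin N) (Fin N) ℂ) (B : Matrix (Fin M) (Fin M) ℂ) :
    kron hM (c • A) B = c • kron hM A B := by
  simp only [kron_eq_submatrix_kronecker, smul_kronecker, submatrix_smul, Pi.smul_apply]

lemma kron_diagonal_diagonal (a : Fin N → ℂ) (b : Fin M → ℂ) :
    kron hM (diagonal a) (diagonal b) =
      diagonal fun k ↦ a (kronIndexEquiv M N k).1 * b (kronIndexEquiv M N k).2 := by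
  rw [kron_eq_submatrix_kronecker, diagonal_kronecker_diagonal, submatrix_diagonal_equiv]
  rfl

lemma Dzpow_mul_eq_kron (q : ℤ) :
    Dzpow (M * N) q = kron hM (Dzpow N q) (diagonal fun r : Fin M ↦
      exp (2 * Real.pi * I * q * (r : ℕ) / (M * N : ℕ))) := by
  rw [Dzpow, Dzpow, kron_diagonal_diagonal]
  congr 1
  funext k
  have hM₀ : (M : ℂ) ≠ 0 := by exact_mod_cast hM.ne'
  have hN₀ : (N : ℂ) ≠ 0 := by exact_mod_cast (Nat.pos_of_lt_mul_left k.pos).ne'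
  have hk : ((k : ℕ) : ℂ) =
      M * ((kronIndexEquiv M N k).1 : ℕ) + ((kronIndexEquiv M N k).2 : ℕ) := by
    exact_mod_cast (Nat.div_add_mod (k : ℕ) M).symm
  rw [← exp_add, hk]
  congr 1
  push_cast
  field_simp

lemma Pzpow_mul_eq_kron (q : ℤ) : Pzpow (M * N) (q * M) = kron hM (Pzpow N q) 1 := by
  have hM₀ : (M : ℤ) ≠ 0 := by exact_mod_cast hM.ne'
  ext i j
  simp only [Pzpow, kron, of_apply, one_apply, Fin.mk.injEq, ← Int.dvd_iff_emod_eq_zero,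
    Nat.cast_mul, mul_dvd_sub_sub_mul_iff hM₀, ite_zero_mul_ite_zero, mul_one]
  norm_cast

end Kron

lemma Pzpow_mulVec_of_periodic {K : ℕ} {f : ℤ → ℂ} (hf : Function.Periodic f K) (q : ℤ)
    (i : Fin K) : (Pzpow K q *ᵥ fun k ↦ f (k : ℕ)) i = f ((i : ℕ) - q) := by
  have hK : (0 : ℤ) < K := by exact_mod_cast i.pos
  obtain ⟨l, hl⟩ : ∃ l : Fin K, ((l : ℕ) : ℤ) = ((i : ℕ) - q) % K := by
    lift ((i : ℕ) - q) % (K : ℤ) to ℕ using Int.emod_nonneg _ hK.ne' with l hl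
    exact ⟨⟨l, by have := Int.emod_lt_of_pos ((i : ℕ) - q) hK; omega⟩, rfl⟩
  have hPzpow (k : Fin K) : Pzpow K q i k = if k = l then 1 else 0 := by
    have hk : ((k : ℕ) : ℤ) % K = (k : ℕ) := Int.emod_eq_of_lt (by omega) (by omega)
    simp only [Pzpow, of_apply, sub_right_comm _ _ q, ← Int.emod_eq_emod_iff_emod_sub_eq_zero,
      ← hl, hk, Nat.cast_inj, Fin.ext_iff, eq_comm]
  simp only [mulVec, dotProduct, hPzpow, ite_mul, one_mul, zero_mul, Finset.sum_ite_eq',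
    Finset.mem_univ, if_true]
  rw [hl, Int.emod_def, mul_comm, ← smul_eq_mul, hf.sub_zsmul_eq]

lemma sum_exp_two_pi_mul_I_mul_div_eq_zero {N : ℕ} {a : ℤ} (ha : ¬(N : ℤ) ∣ a) :
    ∑ n : Fin N, exp (2 * Real.pi * I * a * (n : ℕ) / N) = 0 := by
  rcases eq_or_ne N 0 with rfl | hN
  · rfl
  have hζ := isPrimitiveRoot_exp N hN
  set ζ := exp (2 * Real.pi * I / N)
  have hterm (n : ℕ) : exp (2 * Real.pi * I * a * n / N) = (ζ ^ a) ^ n := by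
    rw [← exp_int_mul, ← exp_nat_mul]
    congr 1
    ring
  have hne : ζ ^ a ≠ 1 := mt (hζ.zpow_eq_one_iff_dvd a).1 ha
  have hpow : (ζ ^ a) ^ N = 1 := by
    rw [← zpow_natCast, zpow_comm, zpow_natCast, hζ.pow_eq_one, _root_.one_zpow]
  simp only [hterm]
  rw [Fin.sum_univ_eq_sum_range (fun n ↦ (ζ ^ a) ^ n), geom_sum_eq hne, hpow, sub_self, zero_div]

/-- The chirp `exp(i(π/N)(k + (N mod 2)/2)²)`, whose values at `k = m - n` are the entries of `Φ_N`
up to the factor `dfntScale N`. Its argument is an integer rather than a residue modulo `N`, so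
that completing the square is an identity of exponents. -/
noncomputable def fresnelChirp (N : ℕ) (k : ℤ) : ℂ :=
  exp (Real.pi / N * I * (k + (N % 2 : ℕ) / 2) ^ 2)

/-- The constant factor `e^{-iπ/4} / √N` common to all entries of `Φ_N`. -/
noncomputable def dfntScale (N : ℕ) : ℂ :=
  1 / (Real.sqrt N : ℂ) * exp (-(Real.pi / 4) * I)

section Fresnel

variable (N : ℕ)

lemma dfnt_apply (m n : Fin N) :
    dfnt N m n = dfntScale N * fresnelChirp N ((m : ℕ) - (n : ℕ)) := by
  rw [dfnt, of_apply, exp_add, ← mul_assoc, dfntScale, fresnelChirp]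
  push_cast
  rfl

lemma dfntScale_mul_star : dfntScale N * star (dfntScale N) = 1 / N := by
  have hsqrt : (Real.sqrt N : ℂ) * Real.sqrt N = N := by
    exact_mod_cast Real.mul_self_sqrt N.cast_nonneg
  have hphase : exp (-(Real.pi / 4) * I) * star (exp (-(Real.pi / 4) * I)) = 1 := by
    simp [← exp_conj, ← exp_add, conj_ofNat]
  rw [dfntScale, star_mul', mul_mul_mul_comm, hphase, ← hsqrt]
  simp

lemma fresnelChirp_mul_star (k : ℤ) : fresnelChirp N k * star (fresnelChirp N k) = 1 := by
  simp [fresnelChirp, ← exp_conj, ← exp_add, conj_ofNat]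

-- Translation by `N` adds `π(2k + N + N mod 2)` to the phase, and the offset `(N mod 2)/2` is what
-- makes this a multiple of `2π`.
lemma fresnelChirp_periodic : Function.Periodic (fresnelChirp N) N := by
  intro k
  rcases eq_or_ne N 0 with rfl | hN
  · simp
  have hN₀ : (N : ℂ) ≠ 0 := by exact_mod_cast hN
  obtain ⟨s, hs⟩ : Even (N + N % 2) := by grind
  have hs' : (N : ℂ) + (N % 2 : ℕ) = s + s := by exact_mod_cast hs
  refine exp_eq_exp_iff_exists_int.2 ⟨k + s, ?_⟩
  push_cast at hs' ⊢
  field_simp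
  linear_combination 4 * N * hs'

lemma alphaCoef_mul_exp_mul_fresnelChirp_sub (q k : ℤ) :
    alphaCoef N q * exp (2 * Real.pi * I * q * k / N) * fresnelChirp N (k - q) =
      fresnelChirp N k := by
  rw [alphaCoef, fresnelChirp, fresnelChirp, ← exp_add, ← exp_add]
  congr 1
  push_cast
  ring

lemma dfnt_mul_star_dfnt (m m' n : Fin N) :
    dfnt N m n * star (dfnt N m' n) =
      1 / N * alphaCoef N ((m : ℕ) - (m' : ℕ)) *
        exp (2 * Real.pi * I * ((m : ℕ) - (m' : ℕ) : ℤ) * ((m : ℕ) - (n : ℕ) : ℤ) / N) := by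
  rw [dfnt_apply, dfnt_apply, star_mul', mul_mul_mul_comm, dfntScale_mul_star,
    ← alphaCoef_mul_exp_mul_fresnelChirp_sub N ((m : ℕ) - (m' : ℕ)), sub_sub_sub_cancel_left,
    mul_assoc _ (fresnelChirp _ _), fresnelChirp_mul_star, mul_one, ← mul_assoc]

lemma dfnt_mul_conjTranspose : dfnt N * (dfnt N)ᴴ = 1 := by
  ext m m'
  have hN₀ : (N : ℂ) ≠ 0 := by exact_mod_cast m.pos.ne'
  simp only [mul_apply, conjTranspose_apply, dfnt_mul_star_dfnt]
  rcases eq_or_ne m m' with rfl | hne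
  · simp [alphaCoef, hN₀]
  · have hndvd : ¬(N : ℤ) ∣ (m' : ℕ) - (m : ℕ) := fun hdvd ↦
      hne (Fin.ext (Nat.ModEq.eq_of_lt_of_lt (Nat.modEq_iff_dvd.2 hdvd) m.isLt m'.isLt))
    have hsplit (n : Fin N) :
        exp (2 * Real.pi * I * ((m : ℕ) - (m' : ℕ) : ℤ) * ((m : ℕ) - (n : ℕ) : ℤ) / N) =
          exp (2 * Real.pi * I * ((m : ℕ) - (m' : ℕ) : ℤ) * (m : ℕ) / N) *
            exp (2 * Real.pi * I * ((m' : ℕ) - (m : ℕ) : ℤ) * (n : ℕ) / N) := by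
      rw [← exp_add]
      congr 1
      push_cast
      ring
    simp only [hsplit, ← Finset.mul_sum, sum_exp_two_pi_mul_I_mul_div_eq_zero hndvd, mul_zero,
      one_apply_ne hne]

lemma Pzpow_mul_dfnt_apply (q : ℤ) (m n : Fin N) :
    (Pzpow N q * dfnt N) m n = dfntScale N * fresnelChirp N ((m : ℕ) - (n : ℕ) - q) := by
  have hperiodic : Function.Periodic
      (fun k : ℤ ↦ dfntScale N * fresnelChirp N (k - (n : ℕ))) N := fun k ↦ by
    simp only [add_sub_right_comm, fresnelChirp_periodic N _]
  rw [sub_right_comm, ← Pzpow_mulVec_of_periodic hperiodic q m]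
  simp only [mul_apply, mulVec, dotProduct, dfnt_apply]

lemma dfnt_mul_Dzpow (q : ℤ) :
    dfnt N * Dzpow N q = alphaCoef N q • (Dzpow N q * Pzpow N q) * dfnt N := by
  ext m n
  have hexp : exp (2 * Real.pi * I * q * ((m : ℕ) - (n : ℕ) : ℤ) / N) *
      exp (2 * Real.pi * I * q * (n : ℕ) / N) = exp (2 * Real.pi * I * q * (m : ℕ) / N) := by
    rw [← exp_add]
    congr 1
    push_cast
    ring
  rw [smul_mul, Matrix.mul_assoc, Matrix.smul_apply, Dzpow, mul_diagonal, diagonal_mul,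
    Pzpow_mul_dfnt_apply, dfnt_apply, ← alphaCoef_mul_exp_mul_fresnelChirp_sub N q, ← hexp,
    smul_eq_mul]
  ring

lemma dfnt_mul_Dzpow_mul_conjTranspose (q : ℤ) :
    dfnt N * Dzpow N q * (dfnt N)ᴴ = alphaCoef N q • (Dzpow N q * Pzpow N q) := by
  rw [dfnt_mul_Dzpow, Matrix.mul_assoc, dfnt_mul_conjTranspose, Matrix.mul_one]

end Fresnel

/-- With `K = MN`, for every integer `q`,
`(Φ_N ⊗ I_M) D_K^q (Φ_N^H ⊗ I_M) = α_q D_K^q Π_K^{qM}`. -/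
theorem kron_dfnt_Dzpow_kron_dfnt_conjTranspose (M N : ℕ) (hM : 0 < M) (hN : 0 < N) (q : ℤ) :
    kron hM (dfnt N) (1 : Matrix (Fin M) (Fin M) ℂ) * Dzpow (M * N) q *
        kron hM (dfnt N)ᴴ (1 : Matrix (Fin M) (Fin M) ℂ) =
      alphaCoef N q • (Dzpow (M * N) q * Pzpow (M * N) (q * M)) := by
  rw [Dzpow_mul_eq_kron hM, Pzpow_mul_eq_kron hM, kron_mul_kron, kron_mul_kron, kron_mul_kron,
    dfnt_mul_Dzpow_mul_conjTranspose, smul_kron, Matrix.one_mul]
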